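/- Let t0 > 0, let (X, μ) be a measure space, let Λ : X → [0,∞) be measurable, and let b(t) := (a + r·sin(t^α))/t for t ≥ t0, where a > 0, 0 ≤ r ≤ a and α > 1. Set μ0 := min{a, 2}, B := 3r/(α·t0^α), and Γ2 := exp( a(a+r+8) + 5r(a+r+4)/2 + 3r/(α·t0^α) + r·log 3/(α−1) ). Let u : [t0,∞) × X → ℝ be such that for every ξ ∈ X the function t ↦ u(t,ξ) is a solution of the damped oscillator equation u'' + b(t)u' + Λ(ξ)²u = 0, and such that for each t ≥ t0 the functions ξ ↦ u(t,ξ) and ξ ↦ ∂_t u(t,ξ) are measurable. Then for every t ≥ t0 one has ∫_X [ (∂_t u(t,ξ))² + Λ(ξ)²·u(t,ξ)² ] dμ(ξ) ≤ Γ2 · ( ∫_X [ 4e^{2B}(∂_t u(t0,ξ))² + (Λ(ξ)² + 2/t0²)·u(t0,ξ)² ] dμ(ξ) ) · (t0/t)^{μ0}. -/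

import Mathlib

open Real Set Filter MeasureTheory intervalIntegral

/-- A solution of the damped oscillator equation `u'' + b(t) u' + λ² u = 0` on `[t0, ∞)`:
a `C¹` function `u` (with derivative `u'`) whose derivative is locally absolutely continuous
(i.e. it is the integral of a locally integrable function `w`) and which satisfies the
equation almost everywhere on `[t0, ∞)`. -/
def IsDampedSol (t0 : ℝ) (b : ℝ → ℝ) (lam : ℝ) (u u' : ℝ → ℝ) : Prop :=
  (∀ t ∈ Ici t0, HasDerivAt u (u' t) t) ∧
  ContinuousOn u' (Ici t0) ∧
  ∃ w : ℝ → ℝ,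
    (∀ T ≥ t0, IntervalIntegrable w volume t0 T) ∧
    (∀ t ∈ Ici t0, u' t = u' t0 + ∫ s in t0..t, w s) ∧
    (∀ᵐ t ∂(volume.restrict (Ici t0)), w t + b t * u' t + lam ^ 2 * u t = 0)

/-!
With `w = u' + iλu`, the phase `z = w / w̄` rotates with speed `2λ + b Im z`, and the logarithm of
the energy `|w|²` has derivative `-b (1 + Re z)`. Since `b = (a + r sin (t ^ α)) / t`, integrating
`b (1 + Re z)` gives `a log (T / s)` plus integrals of phases rotating with speeds close to `2λ`,
`αt^(α-1)` and `αt^(α-1) ± 2λ`. When `λs ≥ 1/2` these stay bounded by nonstationary phase, except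
around the resonance `αt^(α-1) = 2λ`, which only lasts while `t` grows by a bounded factor. As long
as `λt ≤ 1/2`, on the other hand, Duhamel's formula treats `λ²u` as a perturbation of the damped
equation without restoring force.
-/

/-! ### Rotating phases -/

/-- A phase `z = exp (iθ)` moving along the unit circle during `[s, T]`, with angular velocity
`θ' = ω`. -/
structure RotatesOn (z : ℝ → ℂ) (ω : ℝ → ℝ) (s T : ℝ) : Prop where
  continuousOn : ContinuousOn z (Icc s T)
  norm_eq_one : ∀ t ∈ Icc s T, ‖z t‖ = 1
  hasDerivAt : ∀ t ∈ Ioo s T, HasDerivAt z (ω t * Complex.I * z t) t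

theorem rotatesOn_exp {φ φ' : ℝ → ℝ} {s T : ℝ} (hφ : ∀ t ∈ Icc s T, HasDerivAt φ (φ' t) t) :
    RotatesOn (fun t => Complex.exp (φ t * Complex.I)) φ' s T := by
  have hderiv : ∀ t ∈ Icc s T, HasDerivAt (fun t => Complex.exp (φ t * Complex.I))
      (φ' t * Complex.I * Complex.exp (φ t * Complex.I)) t := fun t ht =>
    ((hφ t ht).ofReal_comp.mul_const Complex.I).cexp.congr_deriv (mul_comm _ _)
  exact ⟨HasDerivAt.continuousOn hderiv, fun t _ => Complex.norm_exp_ofReal_mul_I _,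
    fun t ht => hderiv t (Ioo_subset_Icc_self ht)⟩

namespace RotatesOn

variable {z z₁ z₂ : ℝ → ℂ} {ω ω₁ ω₂ : ℝ → ℝ} {s T : ℝ}

theorem mono (hz : RotatesOn z ω s T) {x y : ℝ} (hx : s ≤ x) (hy : y ≤ T) : RotatesOn z ω x y :=
  ⟨hz.continuousOn.mono (Icc_subset_Icc hx hy),
    fun t ht => hz.norm_eq_one t (Icc_subset_Icc hx hy ht),
    fun t ht => hz.hasDerivAt t (Ioo_subset_Ioo hx hy ht)⟩

theorem mul (h₁ : RotatesOn z₁ ω₁ s T) (h₂ : RotatesOn z₂ ω₂ s T) :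
    RotatesOn (fun t => z₁ t * z₂ t) (fun t => ω₁ t + ω₂ t) s T where
  continuousOn := h₁.continuousOn.mul h₂.continuousOn
  norm_eq_one t ht := by rw [norm_mul, h₁.norm_eq_one t ht, h₂.norm_eq_one t ht, one_mul]
  hasDerivAt t ht := ((h₁.hasDerivAt t ht).mul (h₂.hasDerivAt t ht)).congr_deriv (by
    push_cast; ring)

theorem star (hz : RotatesOn z ω s T) : RotatesOn (fun t => star (z t)) (fun t => -ω t) s T where
  continuousOn := hz.continuousOn.star
  norm_eq_one t ht := by rw [norm_star, hz.norm_eq_one t ht]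
  hasDerivAt t ht := (hz.hasDerivAt t ht).star.congr_deriv (by simp [mul_comm])

theorem const_mul (hz : RotatesOn z ω s T) {w : ℂ} (hw : ‖w‖ = 1) :
    RotatesOn (fun t => w * z t) ω s T where
  continuousOn := continuousOn_const.mul hz.continuousOn
  norm_eq_one t ht := by rw [norm_mul, hw, hz.norm_eq_one t ht, one_mul]
  hasDerivAt t ht := ((hz.hasDerivAt t ht).const_mul w).congr_deriv (by ring)

theorem abs_re_le_one (hz : RotatesOn z ω s T) {t : ℝ} (ht : t ∈ Icc s T) : |(z t).re| ≤ 1 :=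
  (Complex.abs_re_le_norm _).trans_eq (hz.norm_eq_one t ht)

theorem abs_im_le_one (hz : RotatesOn z ω s T) {t : ℝ} (ht : t ∈ Icc s T) : |(z t).im| ≤ 1 :=
  (Complex.abs_im_le_norm _).trans_eq (hz.norm_eq_one t ht)

theorem hasDerivAt_re (hz : RotatesOn z ω s T) {t : ℝ} (ht : t ∈ Ioo s T) :
    HasDerivAt (fun t => (z t).re) (-(ω t * (z t).im)) t :=
  (Complex.reCLM.hasFDerivAt.comp_hasDerivAt t (hz.hasDerivAt t ht)).congr_deriv (by simp)

theorem continuousOn_im_div (hz : RotatesOn z ω s T) (hs : 0 < s) :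
    ContinuousOn (fun t => (z t).im / t) (Icc s T) :=
  (Complex.continuous_im.comp_continuousOn hz.continuousOn).div continuousOn_id
    fun _ ht => (hs.trans_le ht.1).ne'

end RotatesOn

/-! ### Nonstationary phase -/

theorem inv_sub_inv_le_inv_of_le_abs {κ x y : ℝ} (hκ : 0 < κ) (hx : κ ≤ |x|) (hy : κ ≤ |y|)
    (hxy : x ≤ y) : x⁻¹ - y⁻¹ ≤ κ⁻¹ := by
  rcases le_total 0 x with h0 | h0
  · rw [abs_of_nonneg h0] at hx
    have := inv_anti₀ hκ hx
    have := inv_nonneg.2 (h0.trans hxy)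
    linarith
  · have := neg_abs_le y⁻¹
    have := abs_inv y ▸ inv_anti₀ hκ hy
    have := inv_nonpos.2 h0
    linarith

theorem abs_inv_mul_inv_mul_le {t κ p c : ℝ} (ht : 0 < t) (hκ : 0 < κ) (hp : κ ≤ |p|)
    (hc : |c| ≤ 1) : |t⁻¹ * p⁻¹ * c| ≤ t⁻¹ * κ⁻¹ := by
  have hpinv : |p⁻¹| ≤ κ⁻¹ := abs_inv p ▸ inv_anti₀ hκ hp
  rw [abs_mul, abs_mul, abs_of_pos (inv_pos.2 ht)]
  exact (mul_le_of_le_one_right (by positivity) hc).trans (by gcongr)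

theorem nonstationary_deriv_le {s t κ B p p' ω c σ : ℝ} (hs : 0 < s) (hst : s ≤ t) (hκ : 0 < κ)
    (hp : κ ≤ |p|) (hp' : 0 ≤ p') (hω : |ω - p| ≤ B / t) (hc : |c| ≤ 1) (hσ : |σ| ≤ 1) :
    (t ^ 2)⁻¹ * p⁻¹ * c + t⁻¹ * (p' / p ^ 2) * c + t⁻¹ * p⁻¹ * (ω * σ)
      - s⁻¹ * (p' / p ^ 2) - (1 + B) / κ * (t ^ 2)⁻¹ ≤ σ / t := by
  have ht : 0 < t := hs.trans_le hst
  have hp0 : p ≠ 0 := abs_pos.1 (hκ.trans_le hp)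
  have hpinv : |p⁻¹| ≤ κ⁻¹ := abs_inv p ▸ inv_anti₀ hκ hp
  have amplitude_time : (t ^ 2)⁻¹ * p⁻¹ * c ≤ (t ^ 2)⁻¹ * κ⁻¹ :=
    (le_abs_self _).trans (abs_inv_mul_inv_mul_le (pow_pos ht 2) hκ hp hc)
  have amplitude_speed : t⁻¹ * (p' / p ^ 2) * c ≤ s⁻¹ * (p' / p ^ 2) * 1 := by
    calc t⁻¹ * (p' / p ^ 2) * c ≤ t⁻¹ * (p' / p ^ 2) * 1 := by
          gcongr
          exact (le_abs_self c).trans hc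
      _ ≤ s⁻¹ * (p' / p ^ 2) * 1 := by gcongr
  have perturbation : t⁻¹ * p⁻¹ * ((ω - p) * σ) ≤ t⁻¹ * κ⁻¹ * (B / t * 1) := by
    refine (le_abs_self _).trans ?_
    have hBt : 0 ≤ B / t := (abs_nonneg _).trans hω
    rw [abs_mul, abs_mul, abs_mul, abs_of_pos (inv_pos.2 ht)]
    gcongr
  have main_part : t⁻¹ * p⁻¹ * (ω * σ) = σ / t + t⁻¹ * p⁻¹ * ((ω - p) * σ) := by
    field_simp; ring
  have majorant : (1 + B) / κ * (t ^ 2)⁻¹ = (t ^ 2)⁻¹ * κ⁻¹ + t⁻¹ * κ⁻¹ * (B / t * 1) := by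
    field_simp
  linarith

theorem RotatesOn.hasDerivAt_neg_inv_mul_inv_mul_re {z : ℝ → ℂ} {ω p : ℝ → ℝ} {s T t p' : ℝ}
    (hz : RotatesOn z ω s T) (ht : t ∈ Ioo s T) (ht0 : t ≠ 0) (hp : HasDerivAt p p' t)
    (hp0 : p t ≠ 0) :
    HasDerivAt (fun t => -(t⁻¹ * (p t)⁻¹ * (z t).re))
      ((t ^ 2)⁻¹ * (p t)⁻¹ * (z t).re + t⁻¹ * (p' / p t ^ 2) * (z t).re
        + t⁻¹ * (p t)⁻¹ * (ω t * (z t).im)) t :=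
  (((hasDerivAt_inv ht0).mul (hp.inv hp0)).mul (hz.hasDerivAt_re ht)).neg.congr_deriv (by
    simp only [Pi.mul_apply, Pi.inv_apply]; ring)

-- Integration by parts: `(z t).im / t` is, up to the terms estimated by
-- `nonstationary_deriv_le`, the derivative of `-(z t).re / (t * p t)`.
theorem RotatesOn.neg_le_integral_im_div {z : ℝ → ℂ} {ω p p' : ℝ → ℝ} {s T κ B : ℝ}
    (hz : RotatesOn z ω s T) (hs : 0 < s) (hsT : s ≤ T) (hκ : 0 < κ) (hB : 0 ≤ B)
    (hp : ∀ t ∈ Icc s T, HasDerivAt p (p' t) t) (hp' : ∀ t ∈ Icc s T, 0 ≤ p' t)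
    (hpκ : ∀ t ∈ Icc s T, κ ≤ |p t|) (hω : ∀ t ∈ Ioo s T, |ω t - p t| ≤ B / t) :
    -((3 + B) / (κ * s)) ≤ ∫ t in s..T, (z t).im / t := by
  have hT : 0 < T := hs.trans_le hsT
  have hsm : s ∈ Icc s T := left_mem_Icc.2 hsT
  have hTm : T ∈ Icc s T := right_mem_Icc.2 hsT
  have hpc : ContinuousOn p (Icc s T) := HasDerivAt.continuousOn hp
  have hp0 : ∀ t ∈ Icc s T, p t ≠ 0 := fun t ht => abs_pos.1 (hκ.trans_le (hpκ t ht))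
  have ht0 : ∀ t ∈ Icc s T, t ≠ 0 := fun t ht => (hs.trans_le ht.1).ne'
  have hmono : p s ≤ p T := monotoneOn_of_hasDerivWithinAt_nonneg (convex_Icc s T) hpc
    (fun t ht => (hp t (interior_subset ht)).hasDerivWithinAt)
    (fun t ht => hp' t (interior_subset ht)) hsm hTm hsT
  set G : ℝ → ℝ := fun t => -(t⁻¹ * (p t)⁻¹ * (z t).re) + s⁻¹ * (p t)⁻¹ + (1 + B) / κ * t⁻¹ with hG
  have hGc : ContinuousOn G (Icc s T) := by
    have := Complex.continuous_re.comp_continuousOn hz.continuousOn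
    have := hpc.inv₀ hp0
    have := continuousOn_id.inv₀ ht0
    fun_prop
  have hGd : ∀ t ∈ Ioo s T, HasDerivAt G
      ((t ^ 2)⁻¹ * (p t)⁻¹ * (z t).re + t⁻¹ * (p' t / p t ^ 2) * (z t).re
        + t⁻¹ * (p t)⁻¹ * (ω t * (z t).im)
        - s⁻¹ * (p' t / p t ^ 2) - (1 + B) / κ * (t ^ 2)⁻¹) t := fun t ht => by
    have htm := Ioo_subset_Icc_self ht
    exact (((hz.hasDerivAt_neg_inv_mul_inv_mul_re ht (ht0 t htm) (hp t htm) (hp0 t htm)).add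
      (((hp t htm).inv (hp0 t htm)).const_mul s⁻¹)).add
      ((hasDerivAt_inv (ht0 t htm)).const_mul _)).congr_deriv (by ring)
  have hGT : G T - G s ≤ ∫ t in s..T, (z t).im / t :=
    sub_le_integral_of_hasDeriv_right_of_le hsT hGc (fun t ht => (hGd t ht).hasDerivWithinAt)
      (hz.continuousOn_im_div hs).integrableOn_Icc fun t ht =>
        have htm := Ioo_subset_Icc_self ht
        nonstationary_deriv_le hs ht.1.le hκ (hpκ t htm) (hp' t htm) (hω t ht)
          (hz.abs_re_le_one htm) (hz.abs_im_le_one htm)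
  have hboundary : ∀ t ∈ Icc s T, |t⁻¹ * (p t)⁻¹ * (z t).re| ≤ t⁻¹ * κ⁻¹ := fun t ht =>
    abs_inv_mul_inv_mul_le (hs.trans_le ht.1) hκ (hpκ t ht) (hz.abs_re_le_one ht)
  have hstart := (abs_le.1 (hboundary s hsm)).1
  have hend := (abs_le.1 (hboundary T hTm)).2
  have hspeed := mul_le_mul_of_nonneg_left
    (inv_sub_inv_le_inv_of_le_abs hκ (hpκ s hsm) (hpκ T hTm) hmono) (inv_nonneg.2 hs.le)
  have hrest : 0 ≤ B * (κ⁻¹ * T⁻¹) := by positivity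
  have htotal : (3 + B) / (κ * s) = 3 * (s⁻¹ * κ⁻¹) + B / κ * s⁻¹ := by field_simp
  simp only [hG] at hGT
  rw [htotal]
  linear_combination hGT + hstart + hend + hspeed + hrest

/-! ### Resonance integrals of the oscillating damping -/

theorem exists_threshold {p : ℝ → ℝ} {s T : ℝ} (hsT : s ≤ T) (hp : ContinuousOn p (Icc s T))
    (c : ℝ) : ∃ x ∈ Icc s T, (s < x → p x ≤ c) ∧ (x < T → c ≤ p x) := by
  rcases le_total c (p s) with hs | hs
  · exact ⟨s, left_mem_Icc.2 hsT, fun h => (lt_irrefl s h).elim, fun _ => hs⟩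
  rcases le_total (p T) c with hT | hT
  · exact ⟨T, right_mem_Icc.2 hsT, fun _ => hT, fun h => (lt_irrefl T h).elim⟩
  obtain ⟨x, hx, rfl⟩ := intermediate_value_Icc hsT hp ⟨hs, hT⟩
  exact ⟨x, hx, fun _ => le_rfl, fun _ => le_rfl⟩

theorem neg_le_integral_of_lt_imp {f : ℝ → ℝ} {x y C : ℝ} (hxy : x ≤ y) (hC : 0 ≤ C)
    (h : x < y → -C ≤ ∫ t in x..y, f t) : -C ≤ ∫ t in x..y, f t := by
  rcases hxy.eq_or_lt with rfl | hlt
  · rw [integral_same]; exact neg_nonpos.2 hC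
  · exact h hlt

theorem continuousOn_mul_rpow_sub_one {α s : ℝ} (hs : 0 < s) (T : ℝ) :
    ContinuousOn (fun t => α * t ^ (α - 1)) (Icc s T) :=
  continuousOn_const.mul (continuousOn_id.rpow_const fun _ ht => Or.inl (hs.trans_le ht.1).ne')

theorem mul_rpow_sub_one_le {α s t : ℝ} (hα : 1 ≤ α) (hs : 0 ≤ s) (hst : s ≤ t) :
    α * s ^ (α - 1) ≤ α * t ^ (α - 1) :=
  mul_le_mul_of_nonneg_left (rpow_le_rpow hs hst (sub_nonneg.2 hα)) (zero_le_one.trans hα)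

theorem log_div_le_of_mul_rpow_sub_one_le {α x y C : ℝ} (hα : 1 < α) (hx : 0 < x) (hy : 0 < y)
    (h : α * y ^ (α - 1) ≤ C * (α * x ^ (α - 1))) :
    log (y / x) ≤ log C / (α - 1) := by
  have hratio : (y / x) ^ (α - 1) ≤ C := by
    rw [div_rpow hy.le hx.le, div_le_iff₀ (by positivity)]
    refine le_of_mul_le_mul_left ?_ (zero_lt_one.trans hα)
    linarith
  rw [le_div_iff₀ (sub_pos.2 hα), mul_comm, ← log_rpow (by positivity)]
  exact log_le_log (by positivity) hratio

theorem rotatesOn_exp_rpow {α s T : ℝ} (hs : 0 < s) :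
    RotatesOn (fun t => Complex.exp ((t ^ α : ℝ) * Complex.I)) (fun t => α * t ^ (α - 1)) s T :=
  rotatesOn_exp fun _ ht => hasDerivAt_rpow_const (Or.inl (hs.trans_le ht.1).ne')

namespace RotatesOn

variable {z : ℝ → ℂ} {ω : ℝ → ℝ} {s T α κ ν B : ℝ}

theorem neg_le_integral_im_div_of_rpow (hz : RotatesOn z ω s T) (hs : 0 < s) (hsT : s ≤ T)
    (hα : 1 ≤ α) (hκ : 0 < κ) (hB : 0 ≤ B) (c : ℝ)
    (hpκ : ∀ t ∈ Icc s T, κ ≤ |α * t ^ (α - 1) + c|)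
    (hω : ∀ t ∈ Ioo s T, |ω t - (α * t ^ (α - 1) + c)| ≤ B / t) :
    -((3 + B) / (κ * s)) ≤ ∫ t in s..T, (z t).im / t := by
  refine hz.neg_le_integral_im_div (p' := fun t => α * ((α - 1) * t ^ (α - 1 - 1)))
    hs hsT hκ hB (fun t ht => ?_) (fun t ht => ?_) hpκ hω
  · exact ((hasDerivAt_rpow_const (Or.inl (hs.trans_le ht.1).ne')).const_mul α).add_const c
  · have := hs.trans_le ht.1
    have := sub_nonneg.2 hα
    positivity

theorem neg_log_le_integral_im_div (hz : RotatesOn z ω s T) (hs : 0 < s) (hsT : s ≤ T) :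
    -log (T / s) ≤ ∫ t in s..T, (z t).im / t := by
  rw [← integral_inv_of_pos hs (hs.trans_le hsT), ← intervalIntegral.integral_neg]
  refine integral_mono_on hsT ?_ ((hz.continuousOn_im_div hs).intervalIntegrable_of_Icc hsT)
    fun t ht => ?_
  · exact ((continuousOn_id.inv₀ fun t ht => (hs.trans_le ht.1).ne').neg).intervalIntegrable_of_Icc
      hsT
  · have := (abs_le.1 (hz.abs_im_le_one ht)).1
    have ht0 : 0 < t := hs.trans_le ht.1
    rw [← one_div, ← neg_div]
    gcongr

theorem neg_le_integral_re_div (hz : RotatesOn z ω s T) (hs : 0 < s) (hsT : s ≤ T) (hν : 0 < ν)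
    (hνs : 1 ≤ ν * s) (hB : 0 ≤ B) (hω : ∀ t ∈ Ioo s T, |ω t - ν| ≤ B / t) :
    -(3 + B) ≤ ∫ t in s..T, (z t).re / t := by
  have := (hz.const_mul Complex.norm_I).neg_le_integral_im_div hs hsT hν hB
    (fun t _ => hasDerivAt_const t ν) (fun _ _ => le_rfl) (fun _ _ => le_abs_self ν) hω
  simp only [Complex.I_mul_im] at this
  exact (neg_le_neg (div_le_self (by positivity) hνs)).trans this

theorem neg_le_integral_im_div_of_rpow_add (hz : RotatesOn z ω s T) (hs : 0 < s) (hsT : s ≤ T)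
    (hα : 1 ≤ α) (hν : 0 < ν) (hνs : 1 ≤ ν * s) (hB : 0 ≤ B)
    (hω : ∀ t ∈ Ioo s T, |ω t - (α * t ^ (α - 1) + ν)| ≤ B / t) :
    -(3 + B) ≤ ∫ t in s..T, (z t).im / t := by
  refine (neg_le_neg (div_le_self (by positivity) hνs)).trans
    (hz.neg_le_integral_im_div_of_rpow hs hsT hα hν hB ν (fun t ht => ?_) hω)
  have := hs.trans_le ht.1
  exact (le_add_of_nonneg_left (by positivity)).trans (le_abs_self _)

theorem neg_le_integral_im_div_off_resonance (hz : RotatesOn z ω s T) (hs : 0 < s) (hsT : s ≤ T)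
    (hα : 1 ≤ α) (hν : 0 < ν) (hνs : 1 ≤ ν * s) (hB : 0 ≤ B)
    (hω : ∀ t ∈ Ioo s T, |ω t - (α * t ^ (α - 1) - ν)| ≤ B / t)
    (hoff : ∀ t ∈ Icc s T, ν / 2 ≤ |α * t ^ (α - 1) - ν|) :
    -(2 * (3 + B)) ≤ ∫ t in s..T, (z t).im / t := by
  simp only [sub_eq_add_neg _ ν] at hω hoff
  refine le_trans (neg_le_neg ?_)
    (hz.neg_le_integral_im_div_of_rpow hs hsT hα (half_pos hν) hB (-ν) hoff hω)
  rw [div_le_iff₀ (by positivity)]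
  nlinarith

-- Around the resonance `α * t ^ (α - 1) = ν` the phase is stationary, but this lasts only while
-- `t` grows by a factor `3 ^ (1 / (α - 1))`, so the trivial bound is enough there.
theorem neg_le_integral_im_div_of_rpow_sub (hz : RotatesOn z ω s T) (hs : 0 < s) (hsT : s ≤ T)
    (hα : 1 < α) (hν : 0 < ν) (hνs : 1 ≤ ν * s) (hB : 0 ≤ B)
    (hω : ∀ t ∈ Ioo s T, |ω t - (α * t ^ (α - 1) - ν)| ≤ B / t) :
    -(4 * (3 + B) + log 3 / (α - 1)) ≤ ∫ t in s..T, (z t).im / t := by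
  obtain ⟨x, ⟨hsx, hxT⟩, hx_le, hx_ge⟩ :=
    exists_threshold hsT (continuousOn_mul_rpow_sub_one (α := α) hs T) (ν / 2)
  have hx : 0 < x := hs.trans_le hsx
  obtain ⟨y, ⟨hxy, hyT⟩, hy_le, hy_ge⟩ :=
    exists_threshold hxT (continuousOn_mul_rpow_sub_one (α := α) hx T) (3 * ν / 2)
  have hy : 0 < y := hx.trans_le hxy
  have before : -(2 * (3 + B)) ≤ ∫ t in s..x, (z t).im / t := by
    refine neg_le_integral_of_lt_imp hsx (by positivity) fun hlt => ?_
    refine (hz.mono le_rfl hxT).neg_le_integral_im_div_off_resonance hs hsx hα.le hν hνs hB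
      (fun t ht => hω t (Ioo_subset_Ioo_right hxT ht)) fun t ht => le_abs.2 (Or.inr ?_)
    linarith [mul_rpow_sub_one_le hα.le (hs.le.trans ht.1) ht.2, hx_le hlt]
  have resonant : -(log 3 / (α - 1)) ≤ ∫ t in x..y, (z t).im / t := by
    refine neg_le_integral_of_lt_imp hxy (div_nonneg (log_nonneg (by norm_num)) (sub_pos.2 hα).le)
      fun hlt => (neg_le_neg ?_).trans ((hz.mono hsx hyT).neg_log_le_integral_im_div hx hxy)
    refine log_div_le_of_mul_rpow_sub_one_le hα hx hy ?_
    linarith [hy_le hlt, hx_ge (hlt.trans_le hyT)]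
  have after : -(2 * (3 + B)) ≤ ∫ t in y..T, (z t).im / t := by
    refine neg_le_integral_of_lt_imp hyT (by positivity) fun hlt => ?_
    refine (hz.mono (hsx.trans hxy) le_rfl).neg_le_integral_im_div_off_resonance hy hyT hα.le hν
      (hνs.trans (by gcongr; exact hsx.trans hxy)) hB
      (fun t ht => hω t (Ioo_subset_Ioo_left (hsx.trans hxy) ht))
      fun t ht => le_abs.2 (Or.inl ?_)
    linarith [mul_rpow_sub_one_le hα.le hy.le ht.1, hy_ge hlt]
  have hint : ∀ {p q : ℝ}, s ≤ p → p ≤ q → q ≤ T →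
      IntervalIntegrable (fun t => (z t).im / t) volume p q := fun hp hpq hq =>
    ((hz.mono hp hq).continuousOn_im_div (hs.trans_le hp)).intervalIntegrable_of_Icc hpq
  rw [← integral_add_adjacent_intervals (hint le_rfl (hsx.trans hxy) hyT)
      (hint (hsx.trans hxy) hyT le_rfl),
    ← integral_add_adjacent_intervals (hint le_rfl hsx hxT) (hint hsx hxy hyT)]
  linarith

end RotatesOn

/-- The damping coefficient `b` of the oscillator, the average rate `a / t` being perturbed by the
fast oscillation `r sin (t ^ α) / t`. -/
noncomputable def damping (a r α t : ℝ) : ℝ := (a + r * sin (t ^ α)) / t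

section Damping

variable {a r α s t T : ℝ}

theorem continuousOn_damping {S : Set ℝ} (hS : ∀ t ∈ S, 0 < t) :
    ContinuousOn (damping a r α) S :=
  (continuousOn_const.add (continuousOn_const.mul (continuous_sin.comp_continuousOn
    (continuousOn_id.rpow_const fun t ht => Or.inl (hS t ht).ne')))).div continuousOn_id
    fun t ht => (hS t ht).ne'

theorem damping_nonneg (hr : 0 ≤ r) (hra : r ≤ a) (ht : 0 ≤ t) : 0 ≤ damping a r α t :=
  div_nonneg (by nlinarith [neg_one_le_sin (t ^ α)]) ht

theorem abs_damping_le (ha : 0 ≤ a) (hr : 0 ≤ r) (ht : 0 < t) :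
    |damping a r α t| ≤ (a + r) / t := by
  rw [damping, abs_div, abs_of_pos ht]
  gcongr
  calc |a + r * sin (t ^ α)| ≤ |a| + |r * sin (t ^ α)| := abs_add_le _ _
    _ = a + r * |sin (t ^ α)| := by rw [abs_mul, abs_of_nonneg ha, abs_of_nonneg hr]
    _ ≤ a + r := by gcongr; exact mul_le_of_le_one_right hr (abs_sin_le_one _)

theorem le_integral_damping (hr : 0 ≤ r) (hα : 1 ≤ α) (hs : 0 < s) (hsT : s ≤ T) :
    a * log (T / s) - 3 * r / (α * s ^ α) ≤ ∫ t in s..T, damping a r α t := by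
  have hΦ := rotatesOn_exp_rpow (α := α) (T := T) hs
  have hsin := hΦ.neg_le_integral_im_div_of_rpow hs hsT hα (κ := α * s ^ (α - 1)) (by positivity)
    le_rfl 0
    (fun t ht => by
      rw [add_zero]
      exact (mul_rpow_sub_one_le hα hs.le ht.1).trans (le_abs_self _))
    (fun t _ => by simp)
  have hκ : α * s ^ (α - 1) * s = α * s ^ α := by
    rw [mul_assoc, ← rpow_add_one hs.ne', sub_add_cancel]
  have hsplit : ∀ t : ℝ, damping a r α t =
      a * t⁻¹ + r * ((Complex.exp ((t ^ α : ℝ) * Complex.I)).im / t) := fun t => by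
    rw [Complex.exp_ofReal_mul_I_im, damping]; ring
  have hinv : ContinuousOn (fun t : ℝ => t⁻¹) (Icc s T) :=
    continuousOn_id.inv₀ fun t ht => (hs.trans_le ht.1).ne'
  simp only [hsplit]
  rw [intervalIntegral.integral_add
      ((hinv.intervalIntegrable_of_Icc hsT).const_mul a)
      (((hΦ.continuousOn_im_div hs).intervalIntegrable_of_Icc hsT).const_mul r),
    intervalIntegral.integral_const_mul, intervalIntegral.integral_const_mul,
    integral_inv_of_pos hs (hs.trans_le hsT)]
  rw [hκ, add_zero] at hsin
  linear_combination r * hsin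

theorem damping_mul_one_add_re (z : ℂ) :
    damping a r α t * (1 + z.re) = damping a r α t + a * (z.re / t)
      + r / 2 * ((Complex.exp ((t ^ α : ℝ) * Complex.I) * z).im / t)
      + r / 2 * ((Complex.exp ((t ^ α : ℝ) * Complex.I) * star z).im / t) := by
  simp only [Complex.mul_im, Complex.exp_ofReal_mul_I_im, Complex.exp_ofReal_mul_I_re,
    Complex.star_def, Complex.conj_re, Complex.conj_im, damping]
  ring

theorem RotatesOn.le_integral_damping_mul_one_add_re {z : ℝ → ℂ} {ω : ℝ → ℝ} {ν B : ℝ}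
    (hz : RotatesOn z ω s T) (hs : 0 < s) (hsT : s ≤ T) (ha : 0 ≤ a) (hr : 0 ≤ r) (hα : 1 < α)
    (hν : 0 < ν) (hνs : 1 ≤ ν * s) (hB : 0 ≤ B) (hω : ∀ t ∈ Ioo s T, |ω t - ν| ≤ B / t) :
    a * log (T / s) - (3 * r / (α * s ^ α) + a * (3 + B)
        + r / 2 * (5 * (3 + B) + log 3 / (α - 1)))
      ≤ ∫ t in s..T, damping a r α t * (1 + (z t).re) := by
  have hΦ := rotatesOn_exp_rpow (α := α) (T := T) hs
  have hsum := (hΦ.mul hz).neg_le_integral_im_div_of_rpow_add hs hsT hα.le hν hνs hB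
    fun t ht => by simpa using hω t ht
  have hdiff := (hΦ.mul hz.star).neg_le_integral_im_div_of_rpow_sub hs hsT hα hν hνs hB
    fun t ht => by simpa [← sub_eq_add_neg, abs_sub_comm] using hω t ht
  have hre := hz.neg_le_integral_re_div hs hsT hν hνs hB hω
  have hb := le_integral_damping (a := a) hr hα.le hs hsT
  have hre_cont : ContinuousOn (fun t => (z t).re / t) (Icc s T) :=
    (Complex.continuous_re.comp_continuousOn hz.continuousOn).div continuousOn_id
      fun t ht => (hs.trans_le ht.1).ne'
  have hb_int := (continuousOn_damping (a := a) (r := r) (α := α)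
    fun t (ht : t ∈ Icc s T) => hs.trans_le ht.1).intervalIntegrable_of_Icc
    (μ := volume) hsT
  have hre_int := (hre_cont.intervalIntegrable_of_Icc (μ := volume) hsT).const_mul a
  have hsum_int := (((hΦ.mul hz).continuousOn_im_div hs).intervalIntegrable_of_Icc
    (μ := volume) hsT).const_mul (r / 2)
  have hdiff_int := (((hΦ.mul hz.star).continuousOn_im_div hs).intervalIntegrable_of_Icc
    (μ := volume) hsT).const_mul (r / 2)
  simp only [damping_mul_one_add_re]
  rw [intervalIntegral.integral_add ((hb_int.add hre_int).add hsum_int) hdiff_int,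
    intervalIntegral.integral_add (hb_int.add hre_int) hsum_int,
    intervalIntegral.integral_add hb_int hre_int, intervalIntegral.integral_const_mul,
    intervalIntegral.integral_const_mul, intervalIntegral.integral_const_mul]
  linear_combination hb + a * hre + r / 2 * hsum + r / 2 * hdiff

end Damping

/-! ### Energy and phase of a solution -/

/-- The energy `v² + λ² u²` of an oscillation `u` of frequency `λ` and velocity `v`. -/
def energy (lam : ℝ) (u v : ℝ → ℝ) (t : ℝ) : ℝ := v t ^ 2 + lam ^ 2 * u t ^ 2

/-- The complex amplitude `v + i λ u`, whose square modulus is the energy. -/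
noncomputable def amplitude (lam : ℝ) (u v : ℝ → ℝ) (t : ℝ) : ℂ :=
  v t + (lam * u t : ℝ) * Complex.I

/-- The phase `w / w̄ = exp (2 i arg w)` of the complex amplitude `w`: the argument is doubled
because the energy is dissipated at the rate `2 b (Re w)²`. It is `0` where `w = 0`. -/
noncomputable def phase (lam : ℝ) (u v : ℝ → ℝ) (t : ℝ) : ℂ :=
  amplitude lam u v t / star (amplitude lam u v t)

section Phase

variable {lam t : ℝ} {u v : ℝ → ℝ}

theorem energy_nonneg (lam : ℝ) (u v : ℝ → ℝ) (t : ℝ) : 0 ≤ energy lam u v t := by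
  unfold energy; positivity

theorem normSq_amplitude (lam : ℝ) (u v : ℝ → ℝ) (t : ℝ) :
    Complex.normSq (amplitude lam u v t) = energy lam u v t := by
  rw [amplitude, Complex.normSq_add_mul_I, energy, mul_pow]

theorem amplitude_re (lam : ℝ) (u v : ℝ → ℝ) (t : ℝ) : (amplitude lam u v t).re = v t := by
  simp [amplitude]

theorem amplitude_ne_zero (h : 0 < energy lam u v t) : amplitude lam u v t ≠ 0 :=
  Complex.normSq_pos.1 (h.trans_eq (normSq_amplitude lam u v t).symm)

theorem one_add_re_div_star {w : ℂ} (hw : w ≠ 0) :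
    1 + (w / star w).re = 2 * w.re ^ 2 / Complex.normSq w := by
  have hsq : w.re ^ 2 + w.im ^ 2 ≠ 0 := by
    simpa [Complex.normSq_apply, ← sq] using Complex.normSq_eq_zero.not.2 hw
  simp only [Complex.div_re, Complex.star_def, Complex.conj_re, Complex.conj_im,
    Complex.normSq_apply, ← sq]
  field_simp
  ring

theorem one_add_phase_re (h : 0 < energy lam u v t) :
    1 + (phase lam u v t).re = 2 * v t ^ 2 / energy lam u v t := by
  rw [phase, one_add_re_div_star (amplitude_ne_zero h), amplitude_re, normSq_amplitude]

theorem hasDerivAt_div_star {w : ℝ → ℂ} {lam β : ℝ}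
    (hw : HasDerivAt w (lam * Complex.I * w t - β * (w t).re) t) (h0 : w t ≠ 0) :
    HasDerivAt (fun t => w t / star (w t))
      ((2 * lam + β * (w t / star (w t)).im : ℝ) * Complex.I * (w t / star (w t))) t := by
  refine (hw.div hw.star (star_ne_zero.2 h0)).congr_deriv ?_
  have h0' : (starRingEnd ℂ) (w t) ≠ 0 := star_ne_zero.2 h0
  have hre : ((w t).re : ℂ) = (w t + star (w t)) / 2 := Complex.re_eq_add_conj _
  have him : ((w t / star (w t)).im : ℂ)
      = (w t / star (w t) - star (w t) / w t) / (2 * Complex.I) := by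
    rw [Complex.im_eq_sub_conj]; simp
  push_cast
  rw [him, hre]
  simp only [Complex.star_def, map_sub, map_mul, map_div₀, map_add, Complex.conj_conj,
    Complex.conj_I, Complex.conj_ofReal, map_ofNat]
  field_simp
  ring_nf

end Phase

theorem hasDerivAt_integral {f : ℝ → ℝ} {t0 t : ℝ} (hf : ContinuousOn f (Ici t0)) (ht : t0 < t) :
    HasDerivAt (fun x => ∫ s in t0..x, f s) (f t) t :=
  integral_hasDerivAt_right ((hf.mono Icc_subset_Ici_self).intervalIntegrable_of_Icc ht.le)
    ((hf.mono Ioi_subset_Ici_self).stronglyMeasurableAtFilter isOpen_Ioi t ht)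
    (hf.continuousAt (Ici_mem_nhds ht))

namespace IsDampedSol

variable {t0 T lam : ℝ} {b u v : ℝ → ℝ}

theorem continuousOn (h : IsDampedSol t0 b lam u v) : ContinuousOn u (Ici t0) :=
  HasDerivAt.continuousOn h.1

theorem abs_frequency (h : IsDampedSol t0 b lam u v) : IsDampedSol t0 b |lam| u v := by
  simpa only [IsDampedSol, sq_abs] using h

theorem mono (h : IsDampedSol t0 b lam u v) {s : ℝ} (hs : t0 ≤ s) : IsDampedSol s b lam u v := by
  obtain ⟨hu, hv, w, hwint, hvw, heq⟩ := h
  have hsub : Ici s ⊆ Ici t0 := Ici_subset_Ici.2 hs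
  have hws : ∀ t ≥ s, IntervalIntegrable w volume s t := fun t ht =>
    (hwint s hs).symm.trans (hwint t (hs.trans ht))
  refine ⟨fun t ht => hu t (hsub ht), hv.mono hsub, w, hws, fun t ht => ?_,
    ae_restrict_of_ae_restrict_of_subset hsub heq⟩
  rw [hvw t (hsub ht), hvw s hs, add_assoc,
    integral_add_adjacent_intervals (hwint s hs) (hws t ht)]

theorem deriv_eq_integral (h : IsDampedSol t0 b lam u v) {t : ℝ} (ht : t0 ≤ t) :
    v t = v t0 + ∫ s in t0..t, (-(b s * v s) - lam ^ 2 * u s) := by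
  obtain ⟨-, -, w, -, hvw, heq⟩ := h
  rw [hvw t ht]
  congr 1
  refine intervalIntegral.integral_congr_ae ?_
  rw [ae_restrict_iff' measurableSet_Ici] at heq
  filter_upwards [heq] with s hs hst
  rw [uIoc_of_le ht] at hst
  linear_combination hs hst.1.le

theorem hasDerivAt_deriv (h : IsDampedSol t0 b lam u v) (hb : ContinuousOn b (Ici t0)) {t : ℝ}
    (ht : t0 < t) : HasDerivAt v (-(b t * v t) - lam ^ 2 * u t) t := by
  have hcont : ContinuousOn (fun s => -(b s * v s) - lam ^ 2 * u s) (Ici t0) :=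
    (hb.mul h.2.1).neg.sub (continuousOn_const.mul h.continuousOn)
  refine ((hasDerivAt_integral hcont ht).const_add (v t0)).congr_of_eventuallyEq ?_
  filter_upwards [Ici_mem_nhds ht] with x hx using h.deriv_eq_integral hx

theorem continuousOn_energy (h : IsDampedSol t0 b lam u v) :
    ContinuousOn (energy lam u v) (Ici t0) :=
  (h.2.1.pow 2).add (continuousOn_const.mul (h.continuousOn.pow 2))

theorem hasDerivAt_energy (h : IsDampedSol t0 b lam u v) (hb : ContinuousOn b (Ici t0)) {t : ℝ}
    (ht : t0 < t) : HasDerivAt (energy lam u v) (-(b t * (2 * v t ^ 2))) t :=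
  (((h.hasDerivAt_deriv hb ht).pow 2).add
    (((h.1 t ht.le).pow 2).const_mul (lam ^ 2))).congr_deriv (by push_cast; ring)

theorem antitoneOn_energy (h : IsDampedSol t0 b lam u v) (hb : ContinuousOn b (Ici t0))
    (hb0 : ∀ t ∈ Ici t0, 0 ≤ b t) : AntitoneOn (energy lam u v) (Ici t0) := by
  refine antitoneOn_of_hasDerivWithinAt_nonpos (convex_Ici t0) h.continuousOn_energy
    (f' := fun t => -(b t * (2 * v t ^ 2)))
    (fun t ht => (h.hasDerivAt_energy hb (by simpa using ht)).hasDerivWithinAt) fun t ht => ?_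
  have := hb0 t (interior_subset ht)
  exact neg_nonpos.2 (by positivity)

theorem hasDerivAt_amplitude (h : IsDampedSol t0 b lam u v) (hb : ContinuousOn b (Ici t0)) {t : ℝ}
    (ht : t0 < t) : HasDerivAt (amplitude lam u v)
      (lam * Complex.I * amplitude lam u v t - b t * (amplitude lam u v t).re) t := by
  refine ((h.hasDerivAt_deriv hb ht).ofReal_comp.add
    (((h.1 t ht.le).const_mul lam).ofReal_comp.mul_const Complex.I)).congr_deriv ?_
  rw [amplitude_re, amplitude]
  push_cast
  linear_combination (-(lam : ℂ) ^ 2 * u t) * Complex.I_sq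

theorem rotatesOn_phase (h : IsDampedSol t0 b lam u v) (hb : ContinuousOn b (Ici t0))
    (hE : ∀ t ∈ Icc t0 T, 0 < energy lam u v t) :
    RotatesOn (phase lam u v) (fun t => 2 * lam + b t * (phase lam u v t).im) t0 T := by
  have hw : ContinuousOn (amplitude lam u v) (Icc t0 T) := by
    have hsub : Icc t0 T ⊆ Ici t0 := Icc_subset_Ici_self
    have hv := h.2.1.mono hsub
    have hu := h.continuousOn.mono hsub
    unfold amplitude
    fun_prop
  refine ⟨hw.div hw.star fun t ht => star_ne_zero.2 (amplitude_ne_zero (hE t ht)),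
    fun t ht => ?_, fun t ht => ?_⟩
  · rw [phase, norm_div, norm_star, div_self (norm_ne_zero_iff.2 (amplitude_ne_zero (hE t ht)))]
  · exact hasDerivAt_div_star (h.hasDerivAt_amplitude hb ht.1)
      (amplitude_ne_zero (hE t (Ioo_subset_Icc_self ht)))

theorem energy_eq_exp_mul (h : IsDampedSol t0 b lam u v) (hb : ContinuousOn b (Ici t0))
    (hT : t0 ≤ T) (hE : ∀ t ∈ Icc t0 T, 0 < energy lam u v t) :
    energy lam u v T
      = exp (-∫ t in t0..T, b t * (1 + (phase lam u v t).re)) * energy lam u v t0 := by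
  have hsub : Icc t0 T ⊆ Ici t0 := Icc_subset_Ici_self
  have hlog : ContinuousOn (fun t => log (energy lam u v t)) (Icc t0 T) :=
    (h.continuousOn_energy.mono hsub).log fun t ht => (hE t ht).ne'
  have hrate : ContinuousOn (fun t => -(b t * (1 + (phase lam u v t).re))) (Icc t0 T) :=
    ((hb.mono hsub).mul (continuousOn_const.add (Complex.continuous_re.comp_continuousOn
      (h.rotatesOn_phase hb hE).continuousOn))).neg
  have hderiv : ∀ t ∈ Ioo t0 T, HasDerivAt (fun t => log (energy lam u v t))
      (-(b t * (1 + (phase lam u v t).re))) t := fun t ht => by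
    have hEt := hE t (Ioo_subset_Icc_self ht)
    exact ((h.hasDerivAt_energy hb ht.1).log hEt.ne').congr_deriv (by
      rw [one_add_phase_re hEt]; ring)
  have hftc := integral_eq_sub_of_hasDerivAt_of_le hT hlog hderiv
    (hrate.intervalIntegrable_of_Icc hT)
  rw [intervalIntegral.integral_neg] at hftc
  rw [hftc, exp_sub, exp_log (hE T (right_mem_Icc.2 hT)), exp_log (hE t0 (left_mem_Icc.2 hT)),
    div_mul_cancel₀ _ (hE t0 (left_mem_Icc.2 hT)).ne']

end IsDampedSol

/-! ### High frequencies -/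

/-- The constant `Γ₂` of the decay estimate for data given at time `t0`. -/
noncomputable def decayConstant (a r α t0 : ℝ) : ℝ :=
  exp (a * (a + r + 8) + 5 * r * (a + r + 4) / 2 + 3 * r / (α * t0 ^ α) + r * log 3 / (α - 1))

theorem one_le_decayConstant {a r α t0 : ℝ} (ha : 0 ≤ a) (hr : 0 ≤ r) (hα : 1 < α)
    (ht0 : 0 ≤ t0) : 1 ≤ decayConstant a r α t0 := by
  have := sub_pos.2 hα
  have : 0 ≤ log 3 := log_nonneg (by norm_num)
  exact one_le_exp (by positivity)

theorem decayConstant_le {a r α s t0 : ℝ} (hr : 0 ≤ r) (hα : 0 < α) (ht0 : 0 < t0) (hs : t0 ≤ s) :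
    decayConstant a r α s ≤ decayConstant a r α t0 := by
  unfold decayConstant; gcongr

theorem exp_neg_mul_log_div {s T : ℝ} (hs : 0 < s) (hT : 0 < T) (c : ℝ) :
    exp (-(c * log (T / s))) = (s / T) ^ c := by
  rw [rpow_def_of_pos (div_pos hs hT), ← inv_div T s, log_inv]
  ring_nf

theorem IsDampedSol.energy_le_of_high_frequency {a r α lam t0 T : ℝ} {u v : ℝ → ℝ}
    (h : IsDampedSol t0 (damping a r α) lam u v) (ht0 : 0 < t0) (hr : 0 ≤ r) (hra : r ≤ a)
    (hα : 1 < α) (hlam : 1 / 2 ≤ lam * t0) (hT : t0 ≤ T) :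
    energy lam u v T ≤ decayConstant a r α t0 * (t0 / T) ^ a * energy lam u v t0 := by
  have ha : 0 ≤ a := hr.trans hra
  have hT0 : 0 < T := ht0.trans_le hT
  have hlam0 : 0 < lam := pos_of_mul_pos_left (by linarith) ht0.le
  have hb : ContinuousOn (damping a r α) (Ici t0) :=
    continuousOn_damping fun t ht => ht0.trans_le ht
  have hE0 := energy_nonneg lam u v
  rcases (hE0 T).eq_or_lt with hET | hET
  · rw [← hET]
    have := hE0 t0
    exact mul_nonneg (mul_nonneg (exp_pos _).le (by positivity)) this
  have hE : ∀ t ∈ Icc t0 T, 0 < energy lam u v t := fun t ht =>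
    hET.trans_le (h.antitoneOn_energy hb
      (fun t ht => damping_nonneg hr hra (ht0.le.trans ht)) ht.1 hT ht.2)
  have hz := h.rotatesOn_phase hb hE
  have hspeed : ∀ t ∈ Ioo t0 T,
      |2 * lam + damping a r α t * (phase lam u v t).im - 2 * lam| ≤ (a + r) / t := fun t ht => by
    have hbt := abs_damping_le (α := α) ha hr (ht0.trans ht.1)
    rw [add_sub_cancel_left, abs_mul]
    exact (mul_le_of_le_one_right (abs_nonneg _)
      (hz.abs_im_le_one (Ioo_subset_Icc_self ht))).trans hbt
  have hint := hz.le_integral_damping_mul_one_add_re (ν := 2 * lam) ht0 hT ha hr hα (by positivity)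
    (by linarith) (by positivity) hspeed
  have hlog : 0 ≤ r * log 3 / (α - 1) :=
    div_nonneg (mul_nonneg hr (log_nonneg (by norm_num))) (sub_pos.2 hα).le
  rw [h.energy_eq_exp_mul hb hT hE, decayConstant, ← exp_neg_mul_log_div ht0 hT0, ← exp_add]
  gcongr
  · exact hE0 t0
  · have hlog_half : r / 2 * (log 3 / (α - 1)) = r * log 3 / (α - 1) / 2 := by ring
    linear_combination hint + hlog_half + hlog / 2 + 5 * ha + 5 / 2 * hr

/-! ### Low frequencies -/

theorem integral_rpow_two_mul_le {t0 t T c : ℝ} (ht0 : 0 < t0) (ht : t0 ≤ t) (htT : t ≤ T)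
    (hc0 : 0 ≤ c) (hc1 : c ≤ 1) : ∫ s in t0..t, (t0 / s) ^ (2 * c) ≤ (t0 / T) ^ c * T := by
  have ht' : 0 < t := ht0.trans_le ht
  have hT : 0 < T := ht'.trans_le htT
  have hderiv : ∀ s ∈ Icc t0 t, HasDerivAt
      (fun s => (t0 / T) ^ c * ((1 - c) * s - c * (T * t0) * s⁻¹))
      ((t0 / T) ^ c * ((1 - c) * 1 - c * (T * t0) * -(s ^ 2)⁻¹)) s := fun s hs =>
    (((hasDerivAt_id s).const_mul (1 - c)).sub
      ((hasDerivAt_inv (ht0.trans_le hs.1).ne').const_mul (c * (T * t0)))).const_mul _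
  have hintegrand : ContinuousOn (fun s : ℝ => (t0 / s) ^ (2 * c)) (Icc t0 t) :=
    (continuousOn_const.div continuousOn_id fun s hs => (ht0.trans_le hs.1).ne').rpow_const
      fun _ _ => Or.inr (by positivity)
  have amgm : ∀ s ∈ Ioo t0 t, (t0 / s) ^ (2 * c)
      ≤ (t0 / T) ^ c * ((1 - c) * 1 - c * (T * t0) * -(s ^ 2)⁻¹) := fun s hs => by
    have hs0 : 0 < s := ht0.trans hs.1
    have hmean := geom_mean_le_arith_mean2_weighted hc0 (sub_nonneg.2 hc1)
      (by positivity : 0 ≤ T * t0 / s ^ 2) zero_le_one (add_sub_cancel c 1)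
    have hfactor : (t0 / s) ^ (2 * c) = (t0 / T) ^ c * (T * t0 / s ^ 2) ^ c := by
      rw [← mul_rpow (by positivity) (by positivity), rpow_mul (by positivity), rpow_two]
      congr 1
      field_simp
    rw [hfactor]
    gcongr
    rw [one_rpow, mul_one, mul_one] at hmean
    exact hmean.trans_eq (by ring)
  have hle := integral_le_sub_of_hasDeriv_right_of_le ht (HasDerivAt.continuousOn hderiv)
    (fun s hs => (hderiv s (Ioo_subset_Icc_self hs)).hasDerivWithinAt)
    hintegrand.integrableOn_Icc amgm
  refine hle.trans ?_
  rw [← mul_sub]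
  gcongr
  have hprimitive_start : c * (T * t0) * t0⁻¹ = c * T := by field_simp
  have hprimitive_end : 0 ≤ c * (T * t0) * t⁻¹ := by positivity
  nlinarith

namespace IsDampedSol

variable {t0 T lam K M c : ℝ} {b u v : ℝ → ℝ}

-- Duhamel's formula: `exp (∫ b) * v` has derivative `-exp (∫ b) * λ² u`.
theorem abs_deriv_le (h : IsDampedSol t0 b lam u v) (hb : ContinuousOn b (Ici t0))
    (hb0 : ∀ t ∈ Ici t0, 0 ≤ b t) (hT : t0 ≤ T) (hM : ∀ t ∈ Icc t0 T, |u t| ≤ M) :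
    |v T| ≤ exp (-∫ t in t0..T, b t) * |v t0| + lam ^ 2 * M * (T - t0) := by
  have hsub : Icc t0 T ⊆ Ici t0 := Icc_subset_Ici_self
  set P : ℝ → ℝ := fun t => ∫ s in t0..t, b s with hP
  have hbint := (hb.mono hsub).intervalIntegrable_of_Icc (μ := volume) hT
  have hPc : ContinuousOn P (Icc t0 T) := by
    simpa only [uIcc_of_le hT] using continuousOn_primitive_interval' hbint left_mem_uIcc
  have hPd : ∀ t ∈ Ioo t0 T, HasDerivAt P (b t) t := fun t ht => hasDerivAt_integral hb ht.1
  have hPmono : MonotoneOn P (Icc t0 T) :=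
    monotoneOn_of_hasDerivWithinAt_nonneg (convex_Icc t0 T) hPc (f' := b)
      (fun t ht => (hPd t (by simpa using ht)).hasDerivWithinAt)
      fun t ht => hb0 t (hsub (interior_subset ht))
  have hduhamel := integral_eq_sub_of_hasDerivAt_of_le hT
    (f := fun t => exp (P t) * v t) (f' := fun t => -(exp (P t) * (lam ^ 2 * u t)))
    (hPc.rexp.mul (h.2.1.mono hsub))
    (fun t ht => ((hPd t ht).exp.mul (h.hasDerivAt_deriv hb ht.1)).congr_deriv (by ring))
    ((hPc.rexp.mul (continuousOn_const.mul
      (h.continuousOn.mono hsub))).neg.intervalIntegrable_of_Icc hT)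
  have hforcing : |exp (P T) * v T - exp (P t0) * v t0|
      ≤ exp (P T) * (lam ^ 2 * M) * |T - t0| := by
    rw [← hduhamel, ← norm_eq_abs]
    refine intervalIntegral.norm_integral_le_of_norm_le_const fun t ht => ?_
    rw [uIoc_of_le hT] at ht
    have htm := Ioc_subset_Icc_self ht
    rw [norm_neg, norm_mul, norm_mul, norm_of_nonneg (exp_pos _).le, norm_of_nonneg (sq_nonneg lam)]
    gcongr
    · exact hPmono htm (right_mem_Icc.2 hT) htm.2
    · exact hM t htm
  have hP0 : P t0 = 0 := by rw [hP]; exact intervalIntegral.integral_same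
  rw [abs_of_nonneg (sub_nonneg.2 hT), hP0, exp_zero, one_mul] at hforcing
  have hreverse := (abs_sub_abs_le_abs_sub _ _).trans hforcing
  rw [abs_mul, abs_of_pos (exp_pos _)] at hreverse
  refine le_of_mul_le_mul_left ?_ (exp_pos (P T))
  rw [exp_neg, mul_add, mul_inv_cancel_left₀ (exp_pos (P T)).ne']
  linarith

theorem abs_sub_initial_le (h : IsDampedSol t0 b lam u v) (hb : ContinuousOn b (Ici t0))
    (hb0 : ∀ t ∈ Ici t0, 0 ≤ b t) (ht0 : 0 < t0) (hc0 : 0 ≤ c) (hc1 : c ≤ 1) {τ : ℝ}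
    (hτ : t0 ≤ τ) (hτT : τ ≤ T) (hM : ∀ t ∈ Icc t0 τ, |u t| ≤ M)
    (hK : ∀ t ∈ Icc t0 τ, exp (-∫ s in t0..t, b s) ≤ K * (t0 / t) ^ (2 * c)) :
    |u τ - u t0| ≤ (t0 / T) ^ c * T * (K * |v t0|) + lam ^ 2 * M * (T ^ 2 / 2) := by
  have hsub : Icc t0 τ ⊆ Ici t0 := Icc_subset_Ici_self
  have hM0 : 0 ≤ M := (abs_nonneg _).trans (hM t0 (left_mem_Icc.2 hτ))
  have hτ0 : 0 < τ := ht0.trans_le hτ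
  have hK0 : 0 < K := pos_of_mul_pos_left ((exp_pos _).trans_le (hK τ (right_mem_Icc.2 hτ)))
    (by positivity)
  have hvelocity : ∀ t ∈ Icc t0 τ,
      ‖v t‖ ≤ K * |v t0| * (t0 / t) ^ (2 * c) + lam ^ 2 * M * t := fun t ht => by
    calc |v t| ≤ exp (-∫ s in t0..t, b s) * |v t0| + lam ^ 2 * M * (t - t0) :=
          h.abs_deriv_le hb hb0 ht.1 fun s hs => hM s ⟨hs.1, hs.2.trans ht.2⟩
      _ ≤ K * (t0 / t) ^ (2 * c) * |v t0| + lam ^ 2 * M * t := by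
          gcongr
          · exact hK t ht
          · exact sub_le_self t ht0.le
      _ = K * |v t0| * (t0 / t) ^ (2 * c) + lam ^ 2 * M * t := by ring
  have hpow : ContinuousOn (fun t : ℝ => (t0 / t) ^ (2 * c)) (Icc t0 τ) :=
    (continuousOn_const.div continuousOn_id fun t ht => (ht0.trans_le ht.1).ne').rpow_const
      fun _ _ => Or.inr (by positivity)
  have hpow_int := (hpow.intervalIntegrable_of_Icc (μ := volume) hτ).const_mul (K * |v t0|)
  have hid_int := (intervalIntegrable_id (μ := volume) (a := t0) (b := τ)).const_mul (lam ^ 2 * M)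
  rw [← integral_eq_sub_of_hasDerivAt_of_le hτ (h.continuousOn.mono hsub)
    (fun t ht => h.1 t ht.1.le) ((h.2.1.mono hsub).intervalIntegrable_of_Icc hτ)]
  calc |∫ t in t0..τ, v t|
      ≤ ∫ t in t0..τ, (K * |v t0| * (t0 / t) ^ (2 * c) + lam ^ 2 * M * t) :=
        intervalIntegral.norm_integral_le_of_norm_le hτ
          (ae_of_all _ fun t ht => hvelocity t (Ioc_subset_Icc_self ht)) (hpow_int.add hid_int)
    _ = K * |v t0| * (∫ t in t0..τ, (t0 / t) ^ (2 * c))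
        + lam ^ 2 * M * ((τ ^ 2 - t0 ^ 2) / 2) := by
        rw [intervalIntegral.integral_add hpow_int hid_int, intervalIntegral.integral_const_mul,
          intervalIntegral.integral_const_mul, integral_id]
    _ ≤ K * |v t0| * ((t0 / T) ^ c * T) + lam ^ 2 * M * (T ^ 2 / 2) := by
        gcongr
        · exact integral_rpow_two_mul_le ht0 hτ hτT hc0 hc1
        · exact (sub_le_self _ (sq_nonneg t0)).trans (by gcongr)
    _ = (t0 / T) ^ c * T * (K * |v t0|) + lam ^ 2 * M * (T ^ 2 / 2) := by ring

theorem abs_le_of_low_frequency (h : IsDampedSol t0 b lam u v) (hb : ContinuousOn b (Ici t0))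
    (hb0 : ∀ t ∈ Ici t0, 0 ≤ b t) (ht0 : 0 < t0) (hT : t0 ≤ T) (hlam : (lam * T) ^ 2 ≤ 1 / 4)
    (hc0 : 0 ≤ c) (hc1 : c ≤ 1)
    (hK : ∀ t ∈ Icc t0 T, exp (-∫ s in t0..t, b s) ≤ K * (t0 / t) ^ (2 * c)) :
    ∀ t ∈ Icc t0 T, |u t| ≤ 8 / 7 * ((t0 / T) ^ c * T * (|u t0| / t0 + K * |v t0|)) := by
  have hT0 : 0 < T := ht0.trans_le hT
  obtain ⟨τ, hτ, hmax⟩ := isCompact_Icc.exists_isMaxOn (nonempty_Icc.2 hT)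
    (h.continuousOn.mono (Icc_subset_Ici_self : Icc t0 T ⊆ Ici t0)).abs
  have hgrowth := (abs_sub_abs_le_abs_sub _ _).trans <|
    h.abs_sub_initial_le hb hb0 ht0 hc0 hc1 hτ.1 hτ.2 (fun t ht => hmax ⟨ht.1, ht.2.trans hτ.2⟩)
      fun t ht => hK t ⟨ht.1, ht.2.trans hτ.2⟩
  have habsorb := mul_le_mul_of_nonneg_right hlam (abs_nonneg (u τ))
  have hratio : t0 / T ≤ (t0 / T) ^ c := by
    simpa only [rpow_one] using
      rpow_le_rpow_of_exponent_ge (div_pos ht0 hT0) ((div_le_one hT0).2 hT) hc1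
  have hinitial : |u t0| ≤ (t0 / T) ^ c * T * (|u t0| / t0) := by
    calc |u t0| = t0 / T * T * (|u t0| / t0) := by field_simp
      _ ≤ (t0 / T) ^ c * T * (|u t0| / t0) := by gcongr
  refine fun t ht => (hmax ht).trans ?_
  dsimp only
  linarith

theorem abs_deriv_le_of_low_frequency (h : IsDampedSol t0 b lam u v)
    (hb : ContinuousOn b (Ici t0)) (hb0 : ∀ t ∈ Ici t0, 0 ≤ b t) (ht0 : 0 < t0) (hT : t0 ≤ T)
    (hlam : (lam * T) ^ 2 ≤ 1 / 4) (hc0 : 0 ≤ c) (hc1 : c ≤ 1)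
    (hK : ∀ t ∈ Icc t0 T, exp (-∫ s in t0..t, b s) ≤ K * (t0 / t) ^ (2 * c)) :
    |v T| ≤ (t0 / T) ^ c * (K * |v t0| + 2 / 7 * (|u t0| / t0 + K * |v t0|)) := by
  have hT0 : 0 < T := ht0.trans_le hT
  have hKT := hK T (right_mem_Icc.2 hT)
  have hK0 : 0 < K := pos_of_mul_pos_left ((exp_pos _).trans_le hKT) (by positivity)
  have hκ0 : 0 ≤ (t0 / T) ^ c := by positivity
  have hκ1 : (t0 / T) ^ c ≤ 1 := rpow_le_one (by positivity) ((div_le_one hT0).2 hT) hc0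
  have hpow : (t0 / T) ^ (2 * c) = (t0 / T) ^ c * (t0 / T) ^ c := by
    rw [two_mul, rpow_add (by positivity)]
  have hu := h.abs_le_of_low_frequency hb hb0 ht0 hT hlam hc0 hc1 hK
  set κ := (t0 / T) ^ c
  set x := |u t0| / t0
  have hx0 : 0 ≤ x := by positivity
  calc |v T| ≤ exp (-∫ s in t0..T, b s) * |v t0|
        + lam ^ 2 * (8 / 7 * (κ * T * (x + K * |v t0|))) * (T - t0) :=
        h.abs_deriv_le hb hb0 hT hu
    _ ≤ K * (κ * 1) * |v t0| + lam ^ 2 * (8 / 7 * (κ * T * (x + K * |v t0|))) * T := by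
        gcongr
        · rw [hpow] at hKT
          exact hKT.trans (by gcongr)
        · exact sub_le_self T ht0.le
    _ = κ * (K * |v t0|) + (lam * T) ^ 2 * (8 / 7 * (κ * (x + K * |v t0|))) := by ring
    _ ≤ κ * (K * |v t0|) + 1 / 4 * (8 / 7 * (κ * (x + K * |v t0|))) := by gcongr
    _ = κ * (K * |v t0| + 2 / 7 * (x + K * |v t0|)) := by ring

theorem energy_le_of_low_frequency (h : IsDampedSol t0 b lam u v)
    (hb : ContinuousOn b (Ici t0)) (hb0 : ∀ t ∈ Ici t0, 0 ≤ b t) (ht0 : 0 < t0) (hT : t0 ≤ T)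
    (hlam : (lam * T) ^ 2 ≤ 1 / 4) (hc0 : 0 ≤ c) (hc1 : c ≤ 1)
    (hK : ∀ t ∈ Icc t0 T, exp (-∫ s in t0..t, b s) ≤ K * (t0 / t) ^ (2 * c)) :
    energy lam u v T
      ≤ (t0 / T) ^ (2 * c) * (4 * K ^ 2 * v t0 ^ 2 + 2 / t0 ^ 2 * u t0 ^ 2) := by
  have hT0 : 0 < T := ht0.trans_le hT
  have hu := pow_le_pow_left₀ (abs_nonneg _) (h.abs_le_of_low_frequency hb hb0 ht0 hT hlam hc0 hc1
    hK T (right_mem_Icc.2 hT)) 2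
  have hv := pow_le_pow_left₀ (abs_nonneg _)
    (h.abs_deriv_le_of_low_frequency hb hb0 ht0 hT hlam hc0 hc1 hK) 2
  have hpow : (t0 / T) ^ (2 * c) = ((t0 / T) ^ c) ^ 2 := by
    rw [mul_comm, rpow_mul (by positivity), rpow_two]
  have hx2 : (|u t0| / t0) ^ 2 = u t0 ^ 2 / t0 ^ 2 := by rw [div_pow, sq_abs]
  have hy2 : (K * |v t0|) ^ 2 = K ^ 2 * v t0 ^ 2 := by rw [mul_pow, sq_abs]
  rw [sq_abs] at hu hv
  set κ := (t0 / T) ^ c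
  set x := |u t0| / t0
  set y := K * |v t0|
  have potential : lam ^ 2 * u T ^ 2 ≤ (4 / 7 * (κ * (x + y))) ^ 2 := by
    calc lam ^ 2 * u T ^ 2 ≤ lam ^ 2 * (8 / 7 * (κ * T * (x + y))) ^ 2 := by gcongr
      _ = (lam * T) ^ 2 * (8 / 7 * (κ * (x + y))) ^ 2 := by ring
      _ ≤ 1 / 4 * (8 / 7 * (κ * (x + y))) ^ 2 := by gcongr
      _ = (4 / 7 * (κ * (x + y))) ^ 2 := by ring
  have quadratic : (y + 2 / 7 * (x + y)) ^ 2 + (4 / 7 * (x + y)) ^ 2 ≤ 4 * y ^ 2 + 2 * x ^ 2 := by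
    nlinarith [sq_nonneg (x - y), sq_nonneg x, sq_nonneg y]
  calc energy lam u v T
      ≤ (κ * (y + 2 / 7 * (x + y))) ^ 2 + (4 / 7 * (κ * (x + y))) ^ 2 := add_le_add hv potential
    _ = κ ^ 2 * ((y + 2 / 7 * (x + y)) ^ 2 + (4 / 7 * (x + y)) ^ 2) := by ring
    _ ≤ κ ^ 2 * (4 * y ^ 2 + 2 * x ^ 2) := by gcongr
    _ = (t0 / T) ^ (2 * c) * (4 * K ^ 2 * v t0 ^ 2 + 2 / t0 ^ 2 * u t0 ^ 2) := by
        rw [hpow, hx2, hy2]; ring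

end IsDampedSol

/-! ### Decay of the energy -/

/-- The weighted initial energy `4 e^{2B} v(t0)² + (λ² + 2 / t0²) u(t0)²`,
`B = 3 r / (α t0 ^ α)`, in terms of which the decay is expressed. -/
noncomputable def initialEnergy (r α t0 lam : ℝ) (u v : ℝ → ℝ) : ℝ :=
  4 * exp (2 * (3 * r / (α * t0 ^ α))) * v t0 ^ 2 + (lam ^ 2 + 2 / t0 ^ 2) * u t0 ^ 2

theorem energy_le_initialEnergy {r α t0 : ℝ} (hr : 0 ≤ r) (hα : 0 ≤ α) (ht0 : 0 ≤ t0) (lam : ℝ)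
    (u v : ℝ → ℝ) : energy lam u v t0 ≤ initialEnergy r α t0 lam u v := by
  have hexp : 1 ≤ exp (2 * (3 * r / (α * t0 ^ α))) := one_le_exp (by positivity)
  have hkinetic : v t0 ^ 2 ≤ 4 * exp (2 * (3 * r / (α * t0 ^ α))) * v t0 ^ 2 :=
    le_mul_of_one_le_left (sq_nonneg _) (by linarith)
  have hpotential : 0 ≤ 2 / t0 ^ 2 * u t0 ^ 2 := by positivity
  rw [energy, initialEnergy, add_mul]
  linarith

theorem exp_neg_integral_damping_le {a r α t0 t m : ℝ} (hr : 0 ≤ r) (hα : 1 ≤ α) (ht0 : 0 < t0)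
    (ht : t0 ≤ t) (hm : m ≤ a) :
    exp (-∫ s in t0..t, damping a r α s) ≤ exp (3 * r / (α * t0 ^ α)) * (t0 / t) ^ m := by
  have ht' : 0 < t := ht0.trans_le ht
  calc exp (-∫ s in t0..t, damping a r α s)
      ≤ exp (3 * r / (α * t0 ^ α) + -(a * log (t / t0))) :=
        exp_le_exp.2 (by linarith [le_integral_damping (a := a) hr hα ht0 ht])
    _ = exp (3 * r / (α * t0 ^ α)) * (t0 / t) ^ a := by
        rw [exp_add, exp_neg_mul_log_div ht0 ht']
    _ ≤ exp (3 * r / (α * t0 ^ α)) * (t0 / t) ^ m := by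
        exact mul_le_mul_of_nonneg_left (rpow_le_rpow_of_exponent_ge (by positivity)
          ((div_le_one ht').2 ht) hm) (exp_pos _).le

namespace IsDampedSol

variable {a r α lam t0 T : ℝ} {u v : ℝ → ℝ}

theorem energy_le_initialEnergy_of_low_frequency (h : IsDampedSol t0 (damping a r α) lam u v)
    (ht0 : 0 < t0) (hr : 0 ≤ r) (hra : r ≤ a) (hα : 1 ≤ α) (hT : t0 ≤ T)
    (hlam : (lam * T) ^ 2 ≤ 1 / 4) :
    energy lam u v T ≤ (t0 / T) ^ min a 2 * initialEnergy r α t0 lam u v := by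
  have hmin : 2 * (min a 2 / 2) = min a 2 := mul_div_cancel₀ _ two_ne_zero
  have hmin0 : 0 ≤ min a 2 := le_min (hr.trans hra) zero_le_two
  have hlow := h.energy_le_of_low_frequency (continuousOn_damping fun t ht => ht0.trans_le ht)
    (fun t ht => damping_nonneg hr hra (ht0.le.trans ht)) ht0 hT hlam (c := min a 2 / 2)
    (by linarith) (by linarith [min_le_right a 2]) fun t ht =>
      exp_neg_integral_damping_le hr hα ht0 ht.1 (hmin.trans_le (min_le_left a 2))
  rw [hmin, ← exp_nat_mul, Nat.cast_two] at hlow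
  have hT0 : 0 < T := ht0.trans_le hT
  refine hlow.trans (mul_le_mul_of_nonneg_left ?_ (by positivity))
  rw [initialEnergy, add_mul]
  linarith [mul_nonneg (sq_nonneg lam) (sq_nonneg (u t0))]

theorem energy_le_of_high_frequency_from {s : ℝ} (h : IsDampedSol t0 (damping a r α) lam u v)
    (ht0 : 0 < t0) (hr : 0 ≤ r) (hra : r ≤ a) (hα : 1 < α) (hs : t0 ≤ s) (hsT : s ≤ T)
    (hlam : s < T → 1 / 2 ≤ lam * s) :
    energy lam u v T ≤ decayConstant a r α t0 * (s / T) ^ min a 2 * energy lam u v s := by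
  have hs0 : 0 < s := ht0.trans_le hs
  have hT0 : 0 < T := hs0.trans_le hsT
  have hEs := energy_nonneg lam u v s
  rcases hsT.eq_or_lt with rfl | hlt
  · rw [div_self hs0.ne', one_rpow, mul_one]
    exact le_mul_of_one_le_left hEs (one_le_decayConstant (hr.trans hra) hr hα ht0.le)
  have hrate : (s / T) ^ a ≤ (s / T) ^ min a 2 :=
    rpow_le_rpow_of_exponent_ge (by positivity) ((div_le_one hT0).2 hsT) (min_le_left a 2)
  calc energy lam u v T ≤ decayConstant a r α s * (s / T) ^ a * energy lam u v s :=
        (h.mono hs).energy_le_of_high_frequency hs0 hr hra hα (hlam hlt) hsT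
    _ ≤ decayConstant a r α t0 * (s / T) ^ min a 2 * energy lam u v s := by
        exact mul_le_mul_of_nonneg_right (mul_le_mul
          (decayConstant_le hr (zero_lt_one.trans hα) ht0 hs) hrate (by positivity)
          (exp_pos _).le) hEs

-- The low-frequency estimate is used up to the time `s` at which `|λ| s` reaches `1 / 2`, the
-- high-frequency one from `s` on.
theorem energy_le (h : IsDampedSol t0 (damping a r α) lam u v) (ht0 : 0 < t0) (hr : 0 ≤ r)
    (hra : r ≤ a) (hα : 1 < α) (hT : t0 ≤ T) :
    energy lam u v T
      ≤ decayConstant a r α t0 * (t0 / T) ^ min a 2 * initialEnergy r α t0 lam u v := by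
  wlog hlam : 0 ≤ lam generalizing lam
  · simpa only [energy, initialEnergy, sq_abs] using this h.abs_frequency (abs_nonneg lam)
  obtain ⟨s, ⟨hs, hsT⟩, hbefore, hafter⟩ :=
    exists_threshold hT (continuous_const_mul lam).continuousOn (1 / 2)
  have hs0 : 0 < s := ht0.trans_le hs
  have hT0 : 0 < T := hs0.trans_le hsT
  have low : energy lam u v s ≤ (t0 / s) ^ min a 2 * initialEnergy r α t0 lam u v := by
    rcases hs.eq_or_lt with rfl | hlt
    · rw [div_self ht0.ne', one_rpow, one_mul]
      exact energy_le_initialEnergy hr (zero_le_one.trans hα.le) ht0.le lam u v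
    · have hsq := pow_le_pow_left₀ (by positivity) (hbefore hlt) 2
      exact h.energy_le_initialEnergy_of_low_frequency ht0 hr hra hα.le hs
        (hsq.trans_eq (by norm_num))
  have hratio : (s / T) ^ min a 2 * (t0 / s) ^ min a 2 = (t0 / T) ^ min a 2 := by
    rw [← mul_rpow (by positivity) (by positivity), div_mul_div_cancel₀' hs0.ne']
  have hΓ : 0 < decayConstant a r α t0 := exp_pos _
  calc energy lam u v T
      ≤ decayConstant a r α t0 * (s / T) ^ min a 2 * energy lam u v s :=
        h.energy_le_of_high_frequency_from ht0 hr hra hα hs hsT hafter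
    _ ≤ decayConstant a r α t0 * (s / T) ^ min a 2
        * ((t0 / s) ^ min a 2 * initialEnergy r α t0 lam u v) := by gcongr
    _ = decayConstant a r α t0 * (t0 / T) ^ min a 2 * initialEnergy r α t0 lam u v := by
        rw [← hratio]; ring

end IsDampedSol

theorem decay_fast_oscillations_PDE_general
    {X : Type*} [MeasurableSpace X] (μ : Measure X)
    (t0 a r α : ℝ) (ht0 : 0 < t0) (hr0 : 0 ≤ r) (hra : r ≤ a) (hα : 1 < α)
    (Λ : X → ℝ) (u u' : ℝ → X → ℝ)
    (hsol : ∀ᵐ ξ ∂μ, IsDampedSol t0 (fun t => (a + r * Real.sin (t ^ α)) / t) (Λ ξ)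
      (fun t => u t ξ) (fun t => u' t ξ)) :
    ∀ t ≥ t0,
      (∫⁻ ξ, ENNReal.ofReal (u' t ξ ^ 2 + Λ ξ ^ 2 * u t ξ ^ 2) ∂μ) ≤
        ENNReal.ofReal (Real.exp (a * (a + r + 8) + 5 * r * (a + r + 4) / 2
            + 3 * r / (α * t0 ^ α) + r * Real.log 3 / (α - 1))) *
          (∫⁻ ξ, ENNReal.ofReal
            (4 * Real.exp (2 * (3 * r / (α * t0 ^ α))) * u' t0 ξ ^ 2 +
              (Λ ξ ^ 2 + 2 / t0 ^ 2) * u t0 ξ ^ 2) ∂μ) *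
          ENNReal.ofReal ((t0 / t) ^ (min a 2)) := by
  intro t ht
  have ht' : 0 < t := ht0.trans_le ht
  rw [mul_right_comm, ← ENNReal.ofReal_mul (exp_pos _).le,
    ← lintegral_const_mul' _ _ ENNReal.ofReal_ne_top]
  refine lintegral_mono_ae (hsol.mono fun ξ hξ => ?_)
  rw [← ENNReal.ofReal_mul (by positivity)]
  exact ENNReal.ofReal_le_ofReal (IsDampedSol.energy_le hξ ht0 hr0 hra hα ht)

theorem decay_fast_oscillations_PDE
    {X : Type*} [MeasurableSpace X] (μ : Measure X)
    (t0 a r α : ℝ) (ht0 : 0 < t0) (ha : 0 < a) (hr0 : 0 ≤ r) (hra : r ≤ a) (hα : 1 < α)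
    (Λ : X → ℝ) (hΛmeas : Measurable Λ) (hΛpos : ∀ ξ, 0 ≤ Λ ξ)
    (u u' : ℝ → X → ℝ)
    (hsol : ∀ ξ, IsDampedSol t0 (fun t => (a + r * Real.sin (t ^ α)) / t) (Λ ξ)
      (fun t => u t ξ) (fun t => u' t ξ))
    (hmeas : ∀ t ≥ t0, Measurable (u t) ∧ Measurable (u' t)) :
    ∀ t ≥ t0,
      (∫⁻ ξ, ENNReal.ofReal (u' t ξ ^ 2 + Λ ξ ^ 2 * u t ξ ^ 2) ∂μ) ≤
        ENNReal.ofReal (Real.exp (a * (a + r + 8) + 5 * r * (a + r + 4) / 2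
            + 3 * r / (α * t0 ^ α) + r * Real.log 3 / (α - 1))) *
          (∫⁻ ξ, ENNReal.ofReal
            (4 * Real.exp (2 * (3 * r / (α * t0 ^ α))) * u' t0 ξ ^ 2 +
              (Λ ξ ^ 2 + 2 / t0 ^ 2) * u t0 ξ ^ 2) ∂μ) *
          ENNReal.ofReal ((t0 / t) ^ (min a 2)) :=
  decay_fast_oscillations_PDE_general μ t0 a r α ht0 hr0 hra hα Λ u u' (ae_of_all μ hsol)
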